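/- arXiv:math-ph/0702002 — 2 statements merged into one kernel-verified Lean document; each statement's English description precedes it below -/
import Mathlib

section
/- Suppose n₁ = n₂ = ⋯ = n_N = n. Then a probability distribution p on Ω = Ω₁ × ⋯ × Ω_N satisfies I(p) = (N−1) ln n if and only if there exist bijections π_i : Ω_N → Ω_i (i = 1,…,N−1) such that p = (1/n) ∑_{ω_N ∈ Ω_N} δ_{(π₁(ω_N),…,π_{N−1}(ω_N),ω_N)}. -/
/-!
Two elementary inequalities, each with its equality case, govern the bound on the multi-information:

* `H(q) ≤ ln n` on a set with `n` elements, with equality only for the uniform distribution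
  (`entropy_le_log_card`, `eq_uniform_of_entropy`);
* `H(p_j) ≤ H(p)`, with equality only if every fibre of the `j`-th projection carries its whole
  mass on a single point (`entropy_pushforward_le`, `eq_of_entropy_pushforward_eq`).

For every `j` they give `I(p) = ∑_{i ≠ j} H(p_i) + (H(p_j) - H(p)) ≤ (N - 1) ln n`. If the bound is
attained, then, as `N ≥ 2`, every marginal is uniform and `H(p) = H(p_j)` for every `j`. Hence `p`
takes the value `1/n` on its support, and every coordinate projection maps the support bijectively
onto `Ω_j`. Parametrizing the support by its last coordinate yields the bijections `π_i`.
Conversely, for such a `p` all marginals are uniform and `H(p) = ln n`.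
-/

open Finset

/-- A probability distribution on a finite set: nonnegative and summing to 1. -/
def IsProbDist {α : Type*} [Fintype α] (p : α → ℝ) : Prop :=
  (∀ a, 0 ≤ p a) ∧ ∑ a, p a = 1

/-- Shannon entropy (with `0 * log 0 = 0`, automatic since `Real.log 0 = 0`). -/
noncomputable def entropy {α : Type*} [Fintype α] (p : α → ℝ) : ℝ :=
  - ∑ a, p a * Real.log (p a)

/-- The `i`-th marginal of a distribution on a finite product. -/
noncomputable def marginal {m : ℕ} {Ω : Fin m → Type*} [∀ i, Fintype (Ω i)]
    [∀ i, DecidableEq (Ω i)] (p : (∀ i, Ω i) → ℝ) (i : Fin m) : Ω i → ℝ :=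
  fun x => ∑ ω : ∀ j, Ω j, if ω i = x then p ω else 0

/-- Multi-information `I(p) = ∑ H(p_i) − H(p)`. -/
noncomputable def multiInfo {m : ℕ} {Ω : Fin m → Type*} [∀ i, Fintype (Ω i)]
    [∀ i, DecidableEq (Ω i)] (p : (∀ i, Ω i) → ℝ) : ℝ :=
  (∑ i, entropy (marginal p i)) - entropy p

/-! ### Entropy under a map -/

lemma le_fibre_sum {α β : Type*} [Fintype α] [DecidableEq β] {p : α → ℝ}
    (hp : ∀ a, 0 ≤ p a) (f : α → β) (a : α) :
    p a ≤ ∑ a', if f a' = f a then p a' else 0 := by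
  refine le_trans (by simp) (Finset.single_le_sum
    (f := fun a' => if f a' = f a then p a' else 0) (fun i _ => ?_) (mem_univ a))
  split_ifs
  exacts [hp i, le_rfl]

/-- Termwise form of the monotonicity of entropy: a point has at most the mass of its fibre. -/
lemma entropy_term_le {α β : Type*} [Fintype α] [DecidableEq β] {p : α → ℝ}
    (hp : ∀ a, 0 ≤ p a) (f : α → β) (a : α) :
    p a * Real.log (p a) ≤ p a * Real.log (∑ a', if f a' = f a then p a' else 0) := by
  rcases (hp a).eq_or_lt with h | h
  · simp [← h]
  · exact mul_le_mul_of_nonneg_left (Real.log_le_log h (le_fibre_sum hp f a)) h.le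

/-- The entropy of the image distribution, as a sum over the source: both entropies become sums
over the same index set and can be compared term by term. -/
lemma entropy_pushforward {α β : Type*} [Fintype α] [Fintype β] [DecidableEq β] (p : α → ℝ)
    (f : α → β) :
    entropy (fun b => ∑ a, if f a = b then p a else 0) =
      -∑ a, p a * Real.log (∑ a', if f a' = f a then p a' else 0) := by
  unfold entropy
  congr 1
  simp_rw [Finset.sum_mul]
  rw [Finset.sum_comm]
  refine Finset.sum_congr rfl fun a _ => ?_
  rw [Finset.sum_eq_single (f a)]
  · simp
  · intro b _ hb
    simp [hb.symm]
  · simp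

lemma entropy_pushforward_le {α β : Type*} [Fintype α] [Fintype β] [DecidableEq β] {p : α → ℝ}
    (hp : ∀ a, 0 ≤ p a) (f : α → β) :
    entropy (fun b => ∑ a, if f a = b then p a else 0) ≤ entropy p := by
  rw [entropy_pushforward]
  exact neg_le_neg (Finset.sum_le_sum fun a _ => entropy_term_le hp f a)

/-- If a map `f` preserves the entropy of `p`, then every point of the support of `p` carries the
whole mass of its fibre. -/
lemma eq_of_entropy_pushforward_eq {α β : Type*} [Fintype α] [Fintype β] [DecidableEq β]
    {p : α → ℝ} (hp : ∀ a, 0 ≤ p a) (f : α → β)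
    (h : entropy (fun b => ∑ a, if f a = b then p a else 0) = entropy p) {a : α} (ha : p a ≠ 0) :
    p a = ∑ a', if f a' = f a then p a' else 0 := by
  rw [entropy_pushforward, entropy, neg_inj, eq_comm,
    Finset.sum_eq_sum_iff_of_le fun a _ => entropy_term_le hp f a] at h
  have hpos : 0 < p a := lt_of_le_of_ne (hp a) ha.symm
  exact Real.log_injOn_pos hpos (hpos.trans_le (le_fibre_sum hp f a)) (mul_left_cancel₀ ha (h a (mem_univ a)))

/-! ### Entropy and the uniform distribution -/

/-- The Kullback-Leibler divergence of `q` from the uniform distribution is `ln n - H(q)`; both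
sides are multiplied by `n` here. -/
lemma sum_scaled_mul_log {β : Type*} [Fintype β] {q : β → ℝ} (hq : IsProbDist q) {n : ℕ}
    (hn : n ≠ 0) :
    ∑ b, ((n : ℝ) * q b) * Real.log (n * q b) = n * (Real.log n - entropy q) := by
  have hn' : (n : ℝ) ≠ 0 := by exact_mod_cast hn
  have h : ∀ b, ((n : ℝ) * q b) * Real.log (n * q b)
      = n * (q b * Real.log n + q b * Real.log (q b)) := by
    intro b
    by_cases hb : q b = 0
    · simp [hb]
    · rw [Real.log_mul hn' hb]
      ring
  simp_rw [h]
  rw [← Finset.mul_sum, Finset.sum_add_distrib, ← Finset.sum_mul, hq.2, entropy]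
  ring

lemma sum_scaled_sub_one {β : Type*} [Fintype β] {q : β → ℝ} (hq : IsProbDist q) {n : ℕ}
    (hc : Fintype.card β = n) : ∑ b, ((n : ℝ) * q b - 1) = 0 := by
  rw [Finset.sum_sub_distrib, ← Finset.mul_sum, hq.2]
  simp [hc]

lemma entropy_le_log_card {β : Type*} [Fintype β] {q : β → ℝ} (hq : IsProbDist q) {n : ℕ}
    (hn : n ≠ 0) (hc : Fintype.card β = n) : entropy q ≤ Real.log n := by
  have hpos : (0 : ℝ) < n := by exact_mod_cast Nat.pos_of_ne_zero hn
  have h := Finset.sum_le_sum (s := univ) fun b _ =>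
    Real.self_sub_one_le_mul_log (mul_nonneg hpos.le (hq.1 b))
  rw [sum_scaled_mul_log hq hn, sum_scaled_sub_one hq hc] at h
  exact sub_nonneg.mp (nonneg_of_mul_nonneg_right h hpos)

lemma eq_uniform_of_entropy {β : Type*} [Fintype β] {q : β → ℝ} (hq : IsProbDist q) {n : ℕ}
    (hn : n ≠ 0) (hc : Fintype.card β = n) (h : entropy q = Real.log n) (b : β) :
    q b = 1 / n := by
  have hpos : (0 : ℝ) < n := by exact_mod_cast Nat.pos_of_ne_zero hn
  have hs : ∑ b, ((n : ℝ) * q b - 1) = ∑ b, ((n : ℝ) * q b) * Real.log (n * q b) := by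
    rw [sum_scaled_mul_log hq hn, sum_scaled_sub_one hq hc, h]
    ring
  rw [Finset.sum_eq_sum_iff_of_le fun b _ =>
    Real.self_sub_one_le_mul_log (mul_nonneg hpos.le (hq.1 b))] at hs
  by_contra hb
  -- The inequality `t - 1 ≤ t * log t` is strict for `t ≠ 1`.
  refine (Real.self_sub_one_lt_mul_log (mul_nonneg hpos.le (hq.1 b)) ?_).ne (hs b (mem_univ b))
  intro h1
  exact hb (by field_simp; linarith)

/-! ### Multi-information -/

lemma isProbDist_marginal {m : ℕ} {Ω : Fin m → Type*} [∀ i, Fintype (Ω i)]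
    [∀ i, DecidableEq (Ω i)] {p : (∀ i, Ω i) → ℝ} (hp : IsProbDist p) (i : Fin m) :
    IsProbDist (marginal p i) := by
  refine ⟨fun x => Finset.sum_nonneg fun ω _ => ?_, ?_⟩
  · split_ifs
    exacts [hp.1 ω, le_rfl]
  · unfold marginal
    rw [Finset.sum_comm, ← hp.2]
    simp

/-- Maximality of the multi-information forces uniform marginals, each with the entropy of the
joint distribution. -/
lemma entropies_of_multiInfo {k n : ℕ} (hk : 1 ≤ k) {Ω : Fin (k + 1) → Type*}
    [∀ i, Fintype (Ω i)] [∀ i, DecidableEq (Ω i)] (hn : n ≠ 0)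
    (hcard : ∀ i, Fintype.card (Ω i) = n) {p : (∀ i, Ω i) → ℝ} (hp : IsProbDist p)
    (h : multiInfo p = (k : ℝ) * Real.log n) (i : Fin (k + 1)) :
    entropy (marginal p i) = Real.log n ∧ entropy (marginal p i) = entropy p := by
  have hle : ∀ i, entropy (marginal p i) ≤ Real.log n := fun i =>
    entropy_le_log_card (isProbDist_marginal hp i) hn (hcard i)
  have hmono : ∀ i, entropy (marginal p i) ≤ entropy p := fun i =>
    entropy_pushforward_le hp.1 fun ω => ω i
  have hdef : ∑ i, (Real.log n - entropy (marginal p i)) = Real.log n - entropy p := by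
    rw [Finset.sum_sub_distrib]
    unfold multiInfo at h
    simp
    linarith
  have hnn : ∀ j ∈ (univ : Finset (Fin (k + 1))), 0 ≤ Real.log n - entropy (marginal p j) :=
    fun j _ => sub_nonneg.mpr (hle j)
  -- The deficits `ln n - H(p_j)` sum to `ln n - H(p)`, which is at most any single one of them;
  -- hence all of them but one vanish, whichever one is singled out.
  have hzero : ∀ i j, j ≠ i → entropy (marginal p j) = Real.log n := by
    intro i j hij
    have h2 := Finset.add_le_sum hnn (mem_univ i) (mem_univ j) hij.symm
    linarith [hmono i, hle j]
  have : Nontrivial (Fin (k + 1)) := Fin.nontrivial_iff_two_le.mpr (by omega)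
  have hall : ∀ i, entropy (marginal p i) = Real.log n := fun i =>
    let ⟨j, hj⟩ := exists_ne i
    hzero j i hj.symm
  refine ⟨hall i, ?_⟩
  simp only [hall, sub_self, Finset.sum_const_zero] at hdef
  linarith [hall i]

/-- A uniform distribution on `n` points `s x` which are in bijection with every factor through
the coordinate projections has multi-information `(N - 1) ln n`. -/
lemma multiInfo_of_bijective {k n : ℕ} {Ω : Fin (k + 1) → Type*}
    [∀ i, Fintype (Ω i)] [∀ i, DecidableEq (Ω i)] (hn : n ≠ 0)
    (hcard : ∀ i, Fintype.card (Ω i) = n) {p : (∀ i, Ω i) → ℝ} (hp : IsProbDist p)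
    {β : Type*} [Fintype β] (s : β → ∀ i, Ω i)
    (hs : ∀ i, Function.Bijective fun x => s x i)
    (h : ∀ ω, p ω = (1 / (n : ℝ)) * ∑ x, if ω = s x then 1 else 0) :
    multiInfo p = (k : ℝ) * Real.log n := by
  classical
  have hn' : (n : ℝ) ≠ 0 := by exact_mod_cast hn
  have hm : ∀ i y, marginal p i y = 1 / n := by
    intro i y
    obtain ⟨x₀, rfl⟩ := (hs i).2 y
    unfold marginal
    rw [Finset.sum_eq_single (s x₀)]
    · have : ∀ x, s x₀ = s x ↔ x₀ = x := fun x =>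
        ⟨fun e => (hs i).1 (congrFun e i), fun e => e ▸ rfl⟩
      simp [h, this]
    · intro ω _ hω
      split_ifs with hi
      · rw [h, Finset.sum_eq_zero, mul_zero]
        intro x _
        rw [if_neg]
        rintro rfl
        exact hω (congrArg s ((hs i).1 hi))
      · rfl
    · simp
  have hmi : ∀ i, entropy (marginal p i) = Real.log n := by
    intro i
    unfold entropy
    simp [hm, hcard, hn']
  have hpv : ∀ ω, p ω * Real.log (p ω) = p ω * Real.log (1 / n) := by
    intro ω
    by_cases hω : ∃ x, ω = s x
    · obtain ⟨x₀, rfl⟩ := hω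
      have : ∀ x, s x₀ = s x ↔ x₀ = x := fun x =>
        ⟨fun e => (hs 0).1 (congrFun e 0), fun e => e ▸ rfl⟩
      simp [h, this]
    · push Not at hω
      simp [h, hω]
  have hpe : entropy p = Real.log n := by
    unfold entropy
    simp_rw [hpv]
    rw [← Finset.sum_mul, hp.2]
    simp
  unfold multiInfo
  simp only [hmi, hpe]
  simp
  ring

/-- Case `n₁ = ⋯ = n_N = n` (with `N = k+1` units indexed by `Fin (k+1)`):
`p` achieves `I(p) = (N−1) ln n` iff there are bijections `π_i : Ω_N → Ω_i`
(`i = 1,…,N−1`) such that `p = (1/n) ∑_{ω_N ∈ Ω_N} δ_{(π₁(ω_N),…,π_{N−1}(ω_N),ω_N)}`. -/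
theorem stmt14 {k : ℕ} (hk : 1 ≤ k) (Ω : Fin (k + 1) → Type*) [∀ i, Fintype (Ω i)]
    [∀ i, DecidableEq (Ω i)] (n : ℕ) (hn : 2 ≤ n)
    (hcard : ∀ i, Fintype.card (Ω i) = n)
    (p : (∀ i, Ω i) → ℝ) (hp : IsProbDist p) :
    multiInfo p = (k : ℝ) * Real.log n ↔
      ∃ π : ∀ i : Fin k, Ω (Fin.last k) → Ω i.castSucc,
        (∀ i, Function.Bijective (π i)) ∧
        ∀ ω : ∀ i, Ω i,
          p ω = (1 / (n : ℝ)) * ∑ x : Ω (Fin.last k),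
            if ω = (fun i => Fin.lastCases x (fun j => π j x) i) then 1 else 0 := by
  have hn0 : n ≠ 0 := by omega
  have hnpos : (0 : ℝ) < 1 / n := by
    have : (0 : ℝ) < n := by exact_mod_cast Nat.pos_of_ne_zero hn0
    positivity
  constructor
  · intro h
    have hE := entropies_of_multiInfo hk hn0 hcard hp h
    have hunif : ∀ i y, marginal p i y = 1 / n := fun i =>
      eq_uniform_of_entropy (isProbDist_marginal hp i) hn0 (hcard i) (hE i).1
    have hfib : ∀ i ω, p ω ≠ 0 → p ω = marginal p i (ω i) := fun i ω hω =>
      eq_of_entropy_pushforward_eq hp.1 (fun ω => ω i) (hE i).2 hω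
    -- Two distinct points of the support in one fibre would give it more than its total mass.
    have hinj : ∀ i ω ω', p ω ≠ 0 → p ω' ≠ 0 → ω i = ω' i → ω = ω' := by
      intro i ω ω' hω hω' he
      by_contra hne
      have h2 := Finset.add_le_sum (s := univ)
        (f := fun a : ∀ i, Ω i => if a i = ω i then p a else 0)
        (fun a _ => by
          split_ifs
          exacts [hp.1 a, le_rfl]) (mem_univ ω) (mem_univ ω') hne
      simp only [he, if_true] at h2
      have h3 := hfib i ω' hω'
      unfold marginal at h3
      have h4 : 0 < p ω := lt_of_le_of_ne (hp.1 ω) hω.symm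
      linarith
    have hex : ∀ x : Ω (Fin.last k), ∃ ω : ∀ i, Ω i, ω (Fin.last k) = x ∧ p ω ≠ 0 := by
      intro x
      have h1 : marginal p (Fin.last k) x ≠ 0 := by
        rw [hunif]
        exact hnpos.ne'
      obtain ⟨ω, -, hω⟩ := Finset.exists_ne_zero_of_sum_ne_zero h1
      simp only [ne_eq, ite_eq_right_iff, not_forall] at hω
      exact ⟨ω, hω.1, hω.2⟩
    choose s hs hps using hex
    have hsi : ∀ x y i, s x i = s y i → x = y := fun x y i e => by
      rw [← hs x, ← hs y, hinj i _ _ (hps x) (hps y) e]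
    refine ⟨fun i x => s x i.castSucc, fun i => ?_, fun ω => ?_⟩
    · rw [Fintype.bijective_iff_injective_and_card]
      exact ⟨fun x y e => hsi x y _ e, by rw [hcard, hcard]⟩
    · have hsx : ∀ x, (fun i => Fin.lastCases (motive := Ω) x (fun j => s x j.castSucc) i)
          = s x := by
        intro x
        funext i
        refine Fin.lastCases ?_ (fun j => ?_) i
        · simp [hs]
        · simp
      simp only [hsx]
      by_cases hω : p ω = 0
      · rw [hω, Finset.sum_eq_zero, mul_zero]
        intro x _
        rw [if_neg]
        rintro rfl
        exact hps x hω
      · have hiff : ∀ x, ω = s x ↔ ω (Fin.last k) = x := fun x =>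
          ⟨fun e => by rw [e, hs], fun e => hinj (Fin.last k) _ _ hω (hps x) (by rw [e, hs])⟩
        rw [hfib (Fin.last k) ω hω, hunif]
        simp [hiff]
  · rintro ⟨π, hπ, h⟩
    refine multiInfo_of_bijective hn0 hcard hp _ (fun i => ?_) h
    refine Fin.lastCases ?_ (fun j => ?_) i
    · simp [Function.Bijective, Function.Injective, Function.Surjective]
    · simpa using hπ j
end

section
/- Suppose n₁ = n₂ = ⋯ = n_N = n. Then the set M(Ω₁,…,Ω_N) = {p : I(p) = (N−1) ln n} has cardinality (n!)^{N−1}, and every p ∈ M(Ω₁,…,Ω_N) has support of cardinality exactly n. -/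
/-!
For every index `k`, the multi-information splits as
`I(p) = ∑_{i ≠ k} H(p_i) + (H(p_k) - H(p))`.  Here `H(p_i) ≤ ln n`, with equality only for the
uniform distribution, and `H(p_k) ≤ H(p)`, with equality only if `p ω = p_k (ω k)` on the support
of `p`, i.e. if the `k`-th coordinate determines `ω` there.  Hence `I(p) ≤ (N - 1) ln n`, and as
there are at least two choices of `k`, equality forces all marginals to be uniform and all
coordinate projections to be bijective on the support, on which `p` is constantly `1/n`
(`uniform_of_max`, `bijective_proj`).

Conversely the uniform distribution on the graph of a family of bijections out of `Ω 0`
(`graphDist`) attains the maximum.  Maximizers therefore correspond to families of bijections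
`Ω 0 ≃ Ω i`, `i ≠ 0`, of which there are `(n!)^(N-1)`.
-/

open Finset

/-- Gibbs' inequality, term by term, against the constant `c`. -/
lemma gibbs_term {q c : ℝ} (hq : 0 ≤ q) (hc : 0 < c) :
    -(q * Real.log q) + q * Real.log c ≤ c - q := by
  rcases hq.eq_or_lt with rfl | hq
  · simpa using hc.le
  · have h := Real.log_le_sub_one_of_pos (div_pos hc hq)
    rw [Real.log_div hc.ne' hq.ne'] at h
    have h2 := mul_le_mul_of_nonneg_left h hq.le
    have h3 : q * (c / q - 1) = c - q := by field_simp
    linarith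

lemma gibbs_term_eq {q c : ℝ} (hq : 0 ≤ q) (hc : 0 < c)
    (h : -(q * Real.log q) + q * Real.log c = c - q) : q = c := by
  rcases hq.eq_or_lt with rfl | hq
  · simp at h; exact h
  · by_contra hne
    have hne' : c / q ≠ 1 := fun h' => hne ((div_eq_one_iff_eq hq.ne').1 h').symm
    have h1 := Real.log_lt_sub_one_of_pos (div_pos hc hq) hne'
    rw [Real.log_div hc.ne' hq.ne'] at h1
    have h2 := mul_lt_mul_of_pos_left h1 hq
    have h3 : q * (c / q - 1) = c - q := by field_simp
    linarith

lemma sum_gibbs {α : Type*} [Fintype α] {q : α → ℝ} (hq : IsProbDist q) {n : ℕ} (hn : 0 < n)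
    (hc : Fintype.card α = n) :
    ∑ a, (-(q a * Real.log (q a)) + q a * Real.log ((n : ℝ)⁻¹)) = entropy q - Real.log n ∧
    ∑ a, ((n : ℝ)⁻¹ - q a) = 0 := by
  have hn' : (n : ℝ) ≠ 0 := by positivity
  constructor
  · rw [Finset.sum_add_distrib, ← Finset.sum_mul, hq.2, Finset.sum_neg_distrib, Real.log_inv,
      entropy]
    ring
  · rw [Finset.sum_sub_distrib, hq.2]
    simp [hc, hn']

lemma entropy_le_log {α : Type*} [Fintype α] {q : α → ℝ} (hq : IsProbDist q) {n : ℕ}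
    (hn : 0 < n) (hc : Fintype.card α = n) : entropy q ≤ Real.log n := by
  obtain ⟨h1, h2⟩ := sum_gibbs hq hn hc
  have hn' : (0 : ℝ) < (n : ℝ)⁻¹ := by positivity
  have := Finset.sum_le_sum (s := univ) fun a _ => gibbs_term (hq.1 a) hn'
  linarith

lemma eq_of_entropy_eq_log {α : Type*} [Fintype α] {q : α → ℝ} (hq : IsProbDist q) {n : ℕ}
    (hn : 0 < n) (hc : Fintype.card α = n) (h : entropy q = Real.log n) (a : α) :
    q a = (n : ℝ)⁻¹ := by
  obtain ⟨h1, h2⟩ := sum_gibbs hq hn hc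
  have hn' : (0 : ℝ) < (n : ℝ)⁻¹ := by positivity
  have h3 := (Finset.sum_eq_sum_iff_of_le (s := univ)
    fun a _ => gibbs_term (hq.1 a) hn').1 (by linarith) a (mem_univ a)
  exact gibbs_term_eq (hq.1 a) hn' h3

lemma entropy_of_uniform {α : Type*} [Fintype α] {n : ℕ} (hn : 0 < n)
    (hc : Fintype.card α = n) {q : α → ℝ} (h : ∀ a, q a = (n : ℝ)⁻¹) :
    entropy q = Real.log n := by
  have hn' : (n : ℝ) ≠ 0 := by positivity
  simp [entropy, h, hc, hn']

section
variable {m : ℕ} {Ω : Fin m → Type*} [∀ i, Fintype (Ω i)] [∀ i, DecidableEq (Ω i)]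

/-- Integrating a function of the `i`-th coordinate against `p` or against `p_i` is the same. -/
lemma sum_marginal_mul (p : (∀ i, Ω i) → ℝ) (i : Fin m) (f : Ω i → ℝ) :
    ∑ x, marginal p i x * f x = ∑ ω, p ω * f (ω i) := by
  simp only [marginal, Finset.sum_mul]
  rw [Finset.sum_comm]
  refine Finset.sum_congr rfl fun ω _ => ?_
  simp [ite_mul]

lemma marginal_isProbDist {p : (∀ i, Ω i) → ℝ} (hp : IsProbDist p) (i : Fin m) :
    IsProbDist (marginal p i) := by
  constructor
  · intro x
    refine Finset.sum_nonneg fun ω _ => ?_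
    split_ifs
    exacts [hp.1 ω, le_rfl]
  · simpa [hp.2] using sum_marginal_mul p i fun _ => 1

lemma le_marginal {p : (∀ i, Ω i) → ℝ} (hp : IsProbDist p) (i : Fin m) (ω : ∀ i, Ω i) :
    p ω ≤ marginal p i (ω i) := by
  have := Finset.single_le_sum (s := univ)
    (f := fun ω' : ∀ i, Ω i => if ω' i = ω i then p ω' else 0)
    (fun ω' _ => by
      split_ifs
      exacts [hp.1 ω', le_rfl]) (mem_univ ω)
  simpa [marginal] using this

lemma mul_log_le {p : (∀ i, Ω i) → ℝ} (hp : IsProbDist p) (i : Fin m) (ω : ∀ i, Ω i) :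
    p ω * Real.log (p ω) ≤ p ω * Real.log (marginal p i (ω i)) := by
  rcases (hp.1 ω).eq_or_lt with h | h
  · simp [← h]
  · exact mul_le_mul_of_nonneg_left (Real.log_le_log h (le_marginal hp i ω)) h.le

lemma entropy_marginal (p : (∀ i, Ω i) → ℝ) (i : Fin m) :
    entropy (marginal p i) = -∑ ω, p ω * Real.log (marginal p i (ω i)) := by
  rw [entropy, sum_marginal_mul p i fun x => Real.log (marginal p i x)]

lemma entropy_marginal_le {p : (∀ i, Ω i) → ℝ} (hp : IsProbDist p) (i : Fin m) :
    entropy (marginal p i) ≤ entropy p := by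
  rw [entropy_marginal, entropy]
  exact neg_le_neg (Finset.sum_le_sum fun ω _ => mul_log_le hp i ω)

lemma eq_marginal_of_entropy_eq {p : (∀ i, Ω i) → ℝ} (hp : IsProbDist p) (i : Fin m)
    (h : entropy (marginal p i) = entropy p) (ω : ∀ i, Ω i) (hω : 0 < p ω) :
    p ω = marginal p i (ω i) := by
  rw [entropy_marginal, entropy] at h
  have h3 := (Finset.sum_eq_sum_iff_of_le (s := univ) fun ω _ => mul_log_le hp i ω).1
    (neg_injective h).symm ω (mem_univ ω)
  exact Real.log_injOn_pos hω (hω.trans_le (le_marginal hp i ω)) (mul_left_cancel₀ hω.ne' h3)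

/-- A maximizer of the multi-information has uniform marginals and is constant on its support. -/
lemma uniform_of_max (hm : 2 ≤ m) {n : ℕ} (hn : 0 < n) (hcard : ∀ i, Fintype.card (Ω i) = n)
    {p : (∀ i, Ω i) → ℝ} (hp : IsProbDist p)
    (h : multiInfo p = ((m - 1 : ℕ) : ℝ) * Real.log n) :
    (∀ i x, marginal p i x = (n : ℝ)⁻¹) ∧ ∀ ω, 0 < p ω → p ω = (n : ℝ)⁻¹ := by
  have hle : ∀ i, entropy (marginal p i) ≤ Real.log n := fun i =>
    entropy_le_log (marginal_isProbDist hp i) hn (hcard i)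
  have hsplit : ∀ k, entropy (marginal p k) = entropy p ∧
      ∀ i, i ≠ k → entropy (marginal p i) = Real.log n := by
    intro k
    have h1 : ∑ i ∈ univ.erase k, entropy (marginal p i) + entropy (marginal p k)
        = ∑ i, entropy (marginal p i) := Finset.sum_erase_add _ _ (mem_univ k)
    have h2 : ∑ i ∈ univ.erase k, entropy (marginal p i)
        ≤ ∑ i ∈ univ.erase k, Real.log n := Finset.sum_le_sum fun i _ => hle i
    have h3 : ∑ i ∈ univ.erase k, Real.log n = ((m - 1 : ℕ) : ℝ) * Real.log n := by
      simp [Finset.card_erase_of_mem]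
    have h4 := entropy_marginal_le hp k
    rw [multiInfo] at h
    refine ⟨by linarith, fun i hi => ?_⟩
    exact (Finset.sum_eq_sum_iff_of_le fun i _ => hle i).1 (by linarith) i (by simp [hi])
  have hmarg : ∀ i x, marginal p i x = (n : ℝ)⁻¹ := by
    intro i
    have : Nontrivial (Fin m) := Fin.nontrivial_iff_two_le.2 hm
    obtain ⟨k, hk⟩ := exists_ne i
    exact eq_of_entropy_eq_log (marginal_isProbDist hp i) hn (hcard i) ((hsplit k).2 i hk.symm)
  refine ⟨hmarg, fun ω hω => ?_⟩
  rw [eq_marginal_of_entropy_eq hp ⟨0, by omega⟩ (hsplit _).1 ω hω, hmarg]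

lemma bijective_proj {n : ℕ} (hn : 0 < n) {p : (∀ i, Ω i) → ℝ} (hp : IsProbDist p)
    (h1 : ∀ i x, marginal p i x = (n : ℝ)⁻¹) (h2 : ∀ ω, 0 < p ω → p ω = (n : ℝ)⁻¹) (i : Fin m) :
    Function.Bijective fun s : {ω : ∀ i, Ω i // 0 < p ω} => s.1 i := by
  have hn' : (0 : ℝ) < (n : ℝ)⁻¹ := by positivity
  constructor
  · rintro ⟨a, ha⟩ ⟨b, hb⟩ hab
    dsimp only at hab
    by_contra hne
    have hne' : a ≠ b := fun h => hne (Subtype.ext h)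
    have := Finset.sum_le_sum_of_subset_of_nonneg (s := {a, b}) (t := univ)
      (f := fun ω' : ∀ i, Ω i => if ω' i = b i then p ω' else 0) (subset_univ _)
      (fun ω' _ _ => by
        split_ifs
        exacts [hp.1 ω', le_rfl])
    rw [Finset.sum_pair hne'] at this
    simp only [hab, if_true, h2 a ha, h2 b hb] at this
    have h3 := h1 i (b i)
    rw [marginal] at h3
    linarith
  · intro x
    have h3 : marginal p i x ≠ 0 := by rw [h1]; exact hn'.ne'
    obtain ⟨ω, -, hω⟩ := Finset.exists_ne_zero_of_sum_ne_zero h3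
    obtain ⟨hx, hω⟩ := ite_ne_right_iff.1 hω
    exact ⟨⟨ω, (hp.1 ω).lt_of_ne' hω⟩, hx⟩

/-- The weight `1/n` on every point `(E i x)_i` of the joint graph of the bijections
`E i : A ≃ Ω i`, where `n` is meant to be the cardinality of `A`. -/
noncomputable def graphDist {A : Type*} [Fintype A] (n : ℕ) (E : ∀ i, A ≃ Ω i) :
    (∀ i, Ω i) → ℝ :=
  fun ω => if ω ∈ univ.image (fun (x : A) i => E i x) then (n : ℝ)⁻¹ else 0

lemma sum_graph {A : Type*} [Fintype A] (hm : 0 < m) (E : ∀ i, A ≃ Ω i) (h : (∀ i, Ω i) → ℝ) :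
    ∑ ω, (if ω ∈ univ.image (fun (x : A) i => E i x) then h ω else 0)
      = ∑ x, h fun i => E i x := by
  rw [Finset.sum_ite_mem, Finset.univ_inter, Finset.sum_image]
  intro x _ y _ hxy
  exact (E ⟨0, hm⟩).injective (congrFun hxy _)

lemma graphDist_mem {A : Type*} [Fintype A] (hm : 0 < m) {n : ℕ} (hn : 0 < n)
    (hA : Fintype.card A = n) (hcard : ∀ i, Fintype.card (Ω i) = n) (E : ∀ i, A ≃ Ω i) :
    IsProbDist (graphDist n E) ∧
      multiInfo (graphDist n E) = ((m - 1 : ℕ) : ℝ) * Real.log n := by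
  have hn' : (n : ℝ) ≠ 0 := by positivity
  have hmarg : ∀ i x, marginal (graphDist n E) i x = (n : ℝ)⁻¹ := by
    intro i x
    have h1 := sum_graph hm E fun ω => if ω i = x then (n : ℝ)⁻¹ else 0
    have h2 : ∀ y, E i y = x ↔ y = (E i).symm x := fun y => (E i).eq_symm_apply.symm
    classical
    simp only [h2, Finset.sum_ite_eq', mem_univ, if_true] at h1
    rw [← h1, marginal]
    refine Finset.sum_congr rfl fun ω _ => ?_
    simp only [graphDist]
    split_ifs <;> rfl
  have hent : entropy (graphDist n E) = Real.log n := by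
    have h1 := sum_graph hm E fun _ => (n : ℝ)⁻¹ * Real.log (n : ℝ)⁻¹
    rw [entropy, neg_eq_iff_eq_neg]
    trans ∑ x : A, (n : ℝ)⁻¹ * Real.log (n : ℝ)⁻¹
    · rw [← h1]
      refine Finset.sum_congr rfl fun ω _ => ?_
      simp only [graphDist]
      split_ifs <;> simp
    · simp [hA, hn']
  refine ⟨⟨fun ω => ?_, ?_⟩, ?_⟩
  · unfold graphDist
    split_ifs <;> positivity
  · refine (sum_graph hm E fun _ => (n : ℝ)⁻¹).trans ?_
    simp [hA, hn']
  · rw [multiInfo, hent,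
      Finset.sum_congr rfl fun i _ => entropy_of_uniform hn (hcard i) (hmarg i)]
    simp [Nat.cast_sub (show 1 ≤ m from hm)]
    ring

end

/-- Case `n₁ = ⋯ = n_N = n` (`N ≥ 2` units): the set
`M = {p : I(p) = (N−1) ln n}` has cardinality `(n!)^{N−1}`, and every `p ∈ M`
has support of cardinality exactly `n`. -/
theorem stmt15 {N : ℕ} (hN : 2 ≤ N) (Ω : Fin N → Type*) [∀ i, Fintype (Ω i)]
    [∀ i, DecidableEq (Ω i)] (n : ℕ) (hn : 2 ≤ n)
    (hcard : ∀ i, Fintype.card (Ω i) = n) :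
    Nat.card {p : (∀ i, Ω i) → ℝ //
        IsProbDist p ∧ multiInfo p = ((N - 1 : ℕ) : ℝ) * Real.log n}
      = n.factorial ^ (N - 1) ∧
    ∀ p : (∀ i, Ω i) → ℝ, IsProbDist p →
      multiInfo p = ((N - 1 : ℕ) : ℝ) * Real.log n →
      Nat.card {ω : ∀ i, Ω i // 0 < p ω} = n := by
  have hn0 : 0 < n := by omega
  have hn' : (n : ℝ)⁻¹ ≠ 0 := by positivity
  obtain ⟨m, rfl⟩ : ∃ m, N = m + 1 := ⟨N - 1, by omega⟩
  constructor
  -- A family of bijections `Ω 0 ≃ Ω i.succ` is extended by the identity in coordinate `0`.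
  · let E : (∀ i : Fin m, Ω 0 ≃ Ω i.succ) → ∀ i, Ω 0 ≃ Ω i := fun e =>
      Fin.cons (α := fun i => Ω 0 ≃ Ω i) (Equiv.refl _) e
    let F : (∀ i : Fin m, Ω 0 ≃ Ω i.succ) → {p : (∀ i, Ω i) → ℝ //
        IsProbDist p ∧ multiInfo p = ((m + 1 - 1 : ℕ) : ℝ) * Real.log n} := fun e =>
      ⟨graphDist n (E e), graphDist_mem (by omega) hn0 (hcard 0) hcard (E e)⟩
    have hF : Function.Bijective F := by
      constructor
      · intro e e' hee
        have h1 : graphDist n (E e) = graphDist n (E e') := congrArg Subtype.val hee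
        funext i
        ext x
        have h2 : graphDist n (E e') (fun i => E e i x) ≠ 0 := by
          rw [← h1]
          simpa [graphDist] using hn0.ne'
        have h3 := (ite_ne_right_iff.1 h2).1
        obtain ⟨y, -, hy⟩ := Finset.mem_image.1 h3
        -- Comparing coordinate `0` identifies the parameters of the two graph points.
        have hyx : y = x := congrFun hy 0
        subst hyx
        exact (congrFun hy i.succ).symm
      · rintro ⟨p, hp, hI⟩
        obtain ⟨h1, h2⟩ := uniform_of_max hN hn0 hcard hp hI
        let b : ∀ i, {ω : ∀ i, Ω i // 0 < p ω} ≃ Ω i := fun i =>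
          Equiv.ofBijective _ (bijective_proj hn0 hp h1 h2 i)
        refine ⟨fun i => (b 0).symm.trans (b i.succ), Subtype.ext ?_⟩
        have hE : ∀ i x, E (fun i => (b 0).symm.trans (b i.succ)) i x = ((b 0).symm x).1 i := by
          intro i x
          refine Fin.cases ?_ (fun j => rfl) i
          exact ((b 0).apply_symm_apply x).symm
        funext ω
        simp only [F, graphDist, hE]
        by_cases hω : 0 < p ω
        · rw [if_pos, h2 ω hω]
          refine Finset.mem_image.2 ⟨b 0 ⟨ω, hω⟩, mem_univ _, ?_⟩
          rw [Equiv.symm_apply_apply]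
        · rw [if_neg]
          · exact le_antisymm (hp.1 ω) (not_lt.1 hω)
          · intro h
            obtain ⟨x, -, rfl⟩ := Finset.mem_image.1 h
            exact hω ((b 0).symm x).2
    rw [← Nat.card_eq_of_bijective F hF, Nat.card_pi]
    have : ∀ i : Fin m, Nat.card (Ω 0 ≃ Ω i.succ) = n.factorial := by
      intro i
      rw [Nat.card_eq_fintype_card, Fintype.card_equiv
        (Fintype.equivOfCardEq ((hcard 0).trans (hcard i.succ).symm)), hcard]
    rw [Finset.prod_congr rfl fun i _ => this i]
    simp
  · intro p hp hI
    obtain ⟨h1, h2⟩ := uniform_of_max hN hn0 hcard hp hI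
    rw [Nat.card_eq_of_bijective _ (bijective_proj hn0 hp h1 h2 0), Nat.card_eq_fintype_card,
      hcard]
end
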